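/- arXiv:2602.21510 — 2 statements merged into one kernel-verified Lean document; each statement's English description precedes it below -/
import Mathlib

section
/- Let n ≥ 1, let X be a finite index set, and let {Π_x}_{x∈X} be a POVM on ℂ^{2ⁿ}: each Π_x is a positive semidefinite Hermitian 2ⁿ × 2ⁿ matrix, ∑_{x∈X} Π_x = I, and assume Tr[Π_x] > 0 for each x. For each a ∈ {1, …, 4ⁿ − 1} define F_{aa} := 2^{−n} ∑_{x∈X} (Tr[Π_x P_a])² / Tr[Π_x] (each Tr[Π_x P_a] is real). Then ∑_{a=1}^{4ⁿ−1} F_{aa} ≤ 2ⁿ − 1. -/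
open Matrix Kronecker BigOperators ComplexOrder

/-- The single-qubit Pauli X matrix. -/
def sigmaX : Matrix (Fin 2) (Fin 2) ℂ := !![0, 1; 1, 0]

/-- The single-qubit Pauli Z matrix. -/
def sigmaZ : Matrix (Fin 2) (Fin 2) ℂ := !![1, 0; 0, -1]

/-- The single-qubit Pauli operator `i^{a_x a_z} X^{a_x} Z^{a_z}`. -/
noncomputable def pauli1 (ax az : Bool) : Matrix (Fin 2) (Fin 2) ℂ :=
  (Complex.I ^ ((if ax then 1 else 0) * (if az then 1 else 0) : ℕ)) •
    (sigmaX ^ (if ax then (1 : ℕ) else 0) * sigmaZ ^ (if az then (1 : ℕ) else 0))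

/-- Index of an `n`-qubit Pauli operator: the pair `(a_x, a_z)` of bit strings
(the binary representation of `a ∈ {0, …, 4ⁿ − 1}`). -/
abbrev PauliIdx (n : ℕ) := (Fin n → Bool) × (Fin n → Bool)

/-- The index of the identity Pauli operator `P_0 = I`. -/
def pauliZero (n : ℕ) : PauliIdx n := (fun _ => false, fun _ => false)

/-- The `n`-qubit Pauli operator `P_a = ⨂_{k=1}^n i^{a_{x,k} a_{z,k}} X^{a_{x,k}} Z^{a_{z,k}}`,
the `n`-fold Kronecker product realized on the index set `Fin n → Fin 2`. -/
noncomputable def pauliOp {n : ℕ} (a : PauliIdx n) :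
    Matrix (Fin n → Fin 2) (Fin n → Fin 2) ℂ :=
  Matrix.of fun j k => ∏ l, pauli1 (a.1 l) (a.2 l) (j l) (k l)

/-- The symplectic inner product `⟨[a]₂, [b]₂⟩ = ∑_k (a_{x,k} b_{z,k} + a_{z,k} b_{x,k})`
of the binary representations of two Pauli indices. -/
def sympl {n : ℕ} (a b : PauliIdx n) : ℕ :=
  ∑ k, ((if a.1 k then 1 else 0) * (if b.2 k then 1 else 0)
      + (if a.2 k then 1 else 0) * (if b.1 k then 1 else 0))

lemma pauli1_complete (i j k l : Fin 2) :
    ∑ p : Bool × Bool, pauli1 p.1 p.2 i j * star (pauli1 p.1 p.2 k l)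
      = if i = k ∧ j = l then 2 else 0 := by
  rw [Fintype.sum_prod_type]
  fin_cases i <;> fin_cases j <;> fin_cases k <;> fin_cases l <;>
    simp [pauli1, sigmaX, sigmaZ, Matrix.one_apply] <;> norm_num

lemma pauliOp_complete {n : ℕ} (i j k l : Fin n → Fin 2) :
    ∑ a : PauliIdx n, pauliOp a i j * star (pauliOp a k l)
      = if i = k ∧ j = l then 2 ^ n else 0 := by
  rw [← (Equiv.arrowProdEquivProdArrow (Fin n) (fun _ => Bool) (fun _ => Bool)).sum_comp]
  have h : ∀ f : Fin n → Bool × Bool,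
      pauliOp (Equiv.arrowProdEquivProdArrow (Fin n) (fun _ => Bool) (fun _ => Bool) f) i j *
        star (pauliOp (Equiv.arrowProdEquivProdArrow (Fin n) (fun _ => Bool) (fun _ => Bool) f) k l)
      = ∏ m, (pauli1 (f m).1 (f m).2 (i m) (j m) * star (pauli1 (f m).1 (f m).2 (k m) (l m))) := by
    intro f
    simp only [pauliOp, Matrix.of_apply, Equiv.arrowProdEquivProdArrow_apply, Finset.prod_mul_distrib,
      star_prod]
  rw [Finset.sum_congr rfl (fun f _ => h f)]
  have h2 := Finset.prod_univ_sum (fun _ : Fin n => (Finset.univ : Finset (Bool × Bool)))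
    (fun m p => pauli1 p.1 p.2 (i m) (j m) * star (pauli1 p.1 p.2 (k m) (l m)))
  rw [Fintype.piFinset_univ] at h2
  rw [← h2, Finset.prod_congr rfl (fun m _ => pauli1_complete (i m) (j m) (k m) (l m))]
  split_ifs with hc
  · obtain ⟨rfl, rfl⟩ := hc
    simp
  · have : ∃ m, ¬ (i m = k m ∧ j m = l m) := by
      by_contra hh
      push Not at hh
      exact hc ⟨funext fun m => (hh m).1, funext fun m => (hh m).2⟩
    obtain ⟨m, hm⟩ := this
    exact Finset.prod_eq_zero (Finset.mem_univ m) (if_neg hm)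

lemma sum_trace_mul_star {n : ℕ} (A : Matrix (Fin n → Fin 2) (Fin n → Fin 2) ℂ) :
    ∑ a : PauliIdx n, (A * pauliOp a).trace * star ((A * pauliOp a).trace)
      = 2 ^ n * ∑ i, ∑ j, A i j * star (A i j) := by
  have h : ∀ a : PauliIdx n, (A * pauliOp a).trace * star ((A * pauliOp a).trace)
      = ∑ p : (Fin n → Fin 2) × (Fin n → Fin 2), ∑ q : (Fin n → Fin 2) × (Fin n → Fin 2),
        (A p.1 p.2 * star (A q.1 q.2)) * (pauliOp a p.2 p.1 * star (pauliOp a q.2 q.1)) := by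
    intro a
    have ht : (A * pauliOp a).trace
        = ∑ p : (Fin n → Fin 2) × (Fin n → Fin 2), A p.1 p.2 * pauliOp a p.2 p.1 := by
      rw [Fintype.sum_prod_type]
      simp [Matrix.trace, Matrix.mul_apply]
    rw [ht, star_sum, Finset.sum_mul_sum]
    refine Finset.sum_congr rfl fun p _ => Finset.sum_congr rfl fun q _ => ?_
    rw [star_mul']
    ring
  rw [Finset.sum_congr rfl (fun a _ => h a), Finset.sum_comm]
  rw [← Fintype.sum_prod_type (f := fun p : (Fin n → Fin 2) × (Fin n → Fin 2) =>
    A p.1 p.2 * star (A p.1 p.2)), Finset.mul_sum]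
  refine Finset.sum_congr rfl fun p _ => ?_
  rw [Finset.sum_comm]
  simp only [← Finset.mul_sum, pauliOp_complete]
  rw [Finset.sum_eq_single p]
  · simp; ring
  · intro q _ hq
    rw [if_neg, mul_zero]
    rintro ⟨h1, h2⟩
    exact hq (Prod.ext h2.symm h1.symm)
  · simp

lemma posSemidef_entry {m : Type*} [Fintype m] [DecidableEq m] {A : Matrix m m ℂ}
    (hA : A.PosSemidef) (i j : m) :
    Complex.normSq (A i j) ≤ (A i i).re * (A j j).re := by
  have h := (hA.submatrix ![i, j]).det_nonneg
  rw [Matrix.det_fin_two] at h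
  simp only [Matrix.submatrix_apply, Matrix.cons_val_zero, Matrix.cons_val_one] at h
  have e : A j i = star (A i j) := (hA.1.apply j i).symm
  have d : ∀ i, (A i i).im = 0 := fun i => by
    have := congrArg Complex.im (hA.1.apply i i)
    simp at this
    linarith
  rw [e] at h
  have := (Complex.le_def.1 h).1
  simp [d] at this
  rw [Complex.normSq_apply]
  linarith

lemma sum_trace_sq_le {n : ℕ} {A : Matrix (Fin n → Fin 2) (Fin n → Fin 2) ℂ}
    (hA : A.PosSemidef) :
    ∑ a : PauliIdx n, ((A * pauliOp a).trace).re ^ 2 ≤ 2 ^ n * (A.trace.re) ^ 2 := by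
  have h1 : ∑ a : PauliIdx n, Complex.normSq ((A * pauliOp a).trace)
      = 2 ^ n * ∑ i, ∑ j, Complex.normSq (A i j) := by
    have h := sum_trace_mul_star A
    simp only [Complex.star_def, Complex.mul_conj] at h
    exact_mod_cast h
  calc ∑ a : PauliIdx n, ((A * pauliOp a).trace).re ^ 2
      ≤ ∑ a : PauliIdx n, Complex.normSq ((A * pauliOp a).trace) := by
        refine Finset.sum_le_sum fun a _ => ?_
        rw [Complex.normSq_apply]
        nlinarith [sq_nonneg ((A * pauliOp a).trace).im]
    _ = 2 ^ n * ∑ i, ∑ j, Complex.normSq (A i j) := h1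
    _ ≤ 2 ^ n * ∑ i, ∑ j, (A i i).re * (A j j).re := by
        gcongr with i _ j _
        exact posSemidef_entry hA i j
    _ = 2 ^ n * (A.trace.re) ^ 2 := by
        rw [← Finset.sum_mul_sum, Matrix.trace, Complex.re_sum, sq]
        rfl

lemma pauliOp_zero (n : ℕ) : pauliOp (pauliZero n) = 1 := by
  ext i j
  simp only [pauliOp, pauliZero, Matrix.of_apply, pauli1, Matrix.one_apply]
  simp only [Bool.false_eq_true, if_false, mul_zero, pow_zero, one_smul, mul_one, Matrix.one_apply]
  by_cases h : i = j
  · simp [h]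
  · obtain ⟨m, hm⟩ := Function.ne_iff.1 h
    rw [if_neg h]
    exact Finset.prod_eq_zero (Finset.mem_univ m) (if_neg hm)

/-- **Fisher information bound for single-copy POVMs at the maximally mixed state.**
For any POVM `{Π_x}` on `ℂ^{2ⁿ}`, the diagonal Fisher information entries
`F_{aa} = 2^{−n} ∑_x (Tr[Π_x P_a])² / Tr[Π_x]` over nonzero Pauli indices satisfy
`∑_{a≠0} F_{aa} ≤ 2ⁿ − 1`. -/
theorem povm_fisher_diag_sum_bound (n : ℕ) (hn : 1 ≤ n)
    {ι : Type*} [Fintype ι]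
    (K : ι → Matrix (Fin n → Fin 2) (Fin n → Fin 2) ℂ)
    (hpsd : ∀ x, (K x).PosSemidef)
    (hsum : ∑ x, K x = 1)
    (htr : ∀ x, 0 < ((K x).trace).re) :
    (∑ a ∈ Finset.univ.erase (pauliZero n),
        ((2 : ℝ) ^ n)⁻¹ * ∑ x, ((K x * pauliOp a).trace).re ^ 2 / ((K x).trace).re)
      ≤ (2 : ℝ) ^ n - 1 := by
  rw [← Finset.mul_sum, Finset.sum_comm]
  have key : ∀ x, ∑ a ∈ Finset.univ.erase (pauliZero n),
      ((K x * pauliOp a).trace).re ^ 2 / ((K x).trace).re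
        ≤ ((2 : ℝ) ^ n - 1) * ((K x).trace).re := by
    intro x
    rw [← Finset.sum_div, div_le_iff₀ (htr x)]
    have h := sum_trace_sq_le (hpsd x)
    rw [← Finset.add_sum_erase _ _ (Finset.mem_univ (pauliZero n)), pauliOp_zero, mul_one] at h
    linarith
  have ht : ∑ x, ((K x).trace).re = (2 : ℝ) ^ n := by
    rw [← Complex.re_sum, ← Matrix.trace_sum, hsum, Matrix.trace_one]
    simp
    norm_cast
  have h := Finset.sum_le_sum (fun x (_ : x ∈ Finset.univ) => key x)
  rw [← Finset.mul_sum, ht] at h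
  rw [inv_mul_le_iff₀ (by positivity)]
  linarith
end

section
/- Let n ≥ 1, set N := 4ⁿ, and let p : {0, …, N−1} → ℝ with p_a > 0 for all a and ∑_a p_a = 1. Let U be the N × N orthogonal matrix U_{ab} = 2^{−n}(−1)^{⟨[a]₂,[b]₂⟩}, let D be the diagonal matrix with entries D_{aa} = 1/(N p_a), and set F₀ := Uᵀ D U. Let F be the (N−1) × (N−1) principal submatrix of F₀ obtained by deleting the row and column with index 0. Then F is symmetric positive definite and its smallest eigenvalue satisfies λ_min(F) ≤ 1/(N p₍₂₎), where p₍₂₎ denotes the second-largest value among {p_a}. Equivalently, the largest eigenvalue of F⁻¹ satisfies λ_max(F⁻¹) ≥ N p₍₂₎ = 4ⁿ p₍₂₎. -/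
open Matrix Kronecker BigOperators ComplexOrder

/-- The normalized Walsh–Hadamard matrix `U_{ab} = 2^{−n} (−1)^{⟨[a]₂,[b]₂⟩}` with respect to
the symplectic pairing. -/
noncomputable def walshMatrix (n : ℕ) : Matrix (PauliIdx n) (PauliIdx n) ℝ :=
  Matrix.of fun a b => ((2 : ℝ) ^ n)⁻¹ * (-1) ^ sympl a b

/-- The full Fisher information matrix `F₀ = Uᵀ D U`, where
`D = diag(1/(N p_a))` with `N = 4ⁿ`. -/
noncomputable def fisherFull (n : ℕ) (p : PauliIdx n → ℝ) :
    Matrix (PauliIdx n) (PauliIdx n) ℝ :=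
  (walshMatrix n)ᵀ * Matrix.diagonal (fun a => 1 / ((4 : ℝ) ^ n * p a)) * walshMatrix n

/-- The reduced Fisher information matrix `F`: the principal submatrix of `F₀` obtained by
deleting the row and column indexed by `0`. -/
noncomputable def fisherReduced (n : ℕ) (p : PauliIdx n → ℝ) :
    Matrix {a : PauliIdx n // a ≠ pauliZero n} {a : PauliIdx n // a ≠ pauliZero n} ℝ :=
  (fisherFull n p).submatrix Subtype.val Subtype.val

theorem aux_sum_subtype {ι : Type*} [Fintype ι] [DecidableEq ι] (z : ι) (f : ι → ℝ) (h : f z = 0) :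
    ∑ b : {b : ι // b ≠ z}, f b.1 = ∑ b, f b := by
  rw [← Finset.sum_erase Finset.univ h]
  exact (Finset.sum_subtype (Finset.univ.erase z) (by simp) f).symm

theorem aux_eig {ι : Type*} [Fintype ι] [DecidableEq ι] (A : Matrix ι ι ℝ) (hA : A.IsHermitian)
    (x : ι → ℝ) (hx : x ≠ 0) (c : ℝ) (h : x ⬝ᵥ (A *ᵥ x) ≤ c * (x ⬝ᵥ x)) :
    ∃ i, hA.eigenvalues i ≤ c := by
  by_contra hcon
  push Not at hcon
  have hD : (Matrix.diagonal (fun i => hA.eigenvalues i - c)).PosDef :=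
    Matrix.posDef_diagonal_iff.2 fun i => sub_pos.2 (hcon i)
  have hU : IsUnit (hA.eigenvectorUnitary : Matrix ι ι ℝ) := (Unitary.toUnits hA.eigenvectorUnitary).isUnit
  have hP := (Matrix.IsUnit.posDef_star_right_conjugate_iff hU).2 hD
  have hsp := hA.spectral_theorem
  rw [Unitary.conjStarAlgAut_apply] at hsp
  have hE : (hA.eigenvectorUnitary : Matrix ι ι ℝ) * Matrix.diagonal (fun i => hA.eigenvalues i - c)
      * star (hA.eigenvectorUnitary : Matrix ι ι ℝ) = A - c • (1 : Matrix ι ι ℝ) := by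
    have h1 : Matrix.diagonal (fun i => hA.eigenvalues i - c)
        = Matrix.diagonal (RCLike.ofReal ∘ hA.eigenvalues) - c • (1 : Matrix ι ι ℝ) := by
      ext i j
      by_cases hij : i = j
      · subst hij; simp
      · simp [hij]
    have h2 : (hA.eigenvectorUnitary : Matrix ι ι ℝ) * star (hA.eigenvectorUnitary : Matrix ι ι ℝ) = 1 :=
      Unitary.coe_mul_star_self _
    rw [h1, mul_sub, sub_mul, ← hsp, mul_smul_comm, mul_one, smul_mul_assoc, h2]
  rw [hE] at hP
  have := hP.dotProduct_mulVec_pos hx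
  simp only [star_trivial, Matrix.sub_mulVec, Matrix.smul_mulVec, Matrix.one_mulVec,
    dotProduct_sub, dotProduct_smul, smul_eq_mul] at this
  linarith

theorem aux_sign {n : ℕ} (a c : PauliIdx n) : ((-1 : ℝ)) ^ sympl a c =
    (∏ k, (if a.1 k && c.2 k then (-1 : ℝ) else 1)) * ∏ k, (if a.2 k && c.1 k then (-1 : ℝ) else 1) := by
  rw [sympl, ← Finset.prod_pow_eq_pow_sum, ← Finset.prod_mul_distrib]
  refine Finset.prod_congr rfl fun k _ => ?_
  cases a.1 k <;> cases a.2 k <;> cases c.1 k <;> cases c.2 k <;> norm_num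

theorem aux_half {n : ℕ} (a b : Fin n → Bool) :
    ∑ c : Fin n → Bool, (∏ k, (if a k && c k then (-1 : ℝ) else 1)) *
      ∏ k, (if b k && c k then (-1 : ℝ) else 1) = if a = b then 2 ^ n else 0 := by
  have h := Finset.prod_univ_sum (fun _ : Fin n => (Finset.univ : Finset Bool))
    (fun k c => (if a k && c then (-1 : ℝ) else 1) * (if b k && c then (-1 : ℝ) else 1))
  rw [Fintype.piFinset_univ] at h
  simp_rw [← Finset.prod_mul_distrib]
  rw [← h]
  have h2 : ∀ k, (∑ c : Bool, (if a k && c then (-1 : ℝ) else 1) * (if b k && c then (-1 : ℝ) else 1))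
      = if a k = b k then 2 else 0 := by
    intro k
    cases a k <;> cases b k <;> norm_num
  simp_rw [h2]
  split_ifs with hab
  · subst hab; simp
  · obtain ⟨k, hk⟩ := Function.ne_iff.1 hab
    exact Finset.prod_eq_zero (Finset.mem_univ k) (by simp [hk])

theorem aux_orth (n : ℕ) : walshMatrix n * (walshMatrix n)ᵀ = 1 := by
  ext a b
  have h : (walshMatrix n * (walshMatrix n)ᵀ) a b = ((2 : ℝ) ^ n)⁻¹ * ((2 : ℝ) ^ n)⁻¹ *
      ((if a.2 = b.2 then 2 ^ n else 0) * (if a.1 = b.1 then 2 ^ n else 0)) := by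
    rw [← aux_half, ← aux_half, Finset.sum_mul_sum, ← Fintype.sum_prod_type', Finset.mul_sum,
      Matrix.mul_apply]
    refine Finset.sum_congr rfl fun c _ => ?_
    simp only [walshMatrix, Matrix.transpose_apply, Matrix.of_apply, aux_sign]
    ring
  rw [h, Matrix.one_apply]
  have h0 : (2 : ℝ) ^ n ≠ 0 := by positivity
  by_cases h1 : a.1 = b.1 <;> by_cases h2 : a.2 = b.2 <;> simp [h1, h2, Prod.ext_iff]
  field_simp

/-- **Eigenvalue interlacing bound for the reduced Fisher information matrix.** Let `p` be a
strictly positive probability distribution on Pauli indices, `a₀` an index attaining the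
largest value of `p` and `a₁ ≠ a₀` an index attaining the largest value of `p` among the
remaining indices (so `p a₁` is the second-largest value `p₍₂₎`). Then the reduced Fisher
matrix `F` is symmetric positive definite and has an eigenvalue `≤ 1/(4ⁿ p₍₂₎)`, i.e. its
smallest eigenvalue satisfies `λ_min(F) ≤ 1/(4ⁿ p₍₂₎)` (equivalently
`λ_max(F⁻¹) ≥ 4ⁿ p₍₂₎`). -/
theorem fisher_reduced_min_eigenvalue_bound (n : ℕ) (hn : 1 ≤ n)
    (p : PauliIdx n → ℝ) (hp : ∀ a, 0 < p a) (hpsum : ∑ a, p a = 1)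
    (a₀ : PauliIdx n) (ha₀ : ∀ a, p a ≤ p a₀)
    (a₁ : PauliIdx n) (ha₁ : a₁ ≠ a₀) (ha₁max : ∀ a, a ≠ a₀ → p a ≤ p a₁) :
    (fisherReduced n p).IsSymm ∧ (fisherReduced n p).PosDef ∧
    ∀ hF : (fisherReduced n p).IsHermitian,
      ∃ i, hF.eigenvalues i ≤ 1 / ((4 : ℝ) ^ n * p a₁) := by
  have hO := aux_orth n
  have hO' : (walshMatrix n)ᵀ * walshMatrix n = 1 := mul_eq_one_comm.1 hO
  have hN : (0 : ℝ) < 4 ^ n := by positivity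
  have hPD0 : (fisherFull n p).PosDef := by
    have hD : (Matrix.diagonal (fun a => 1 / ((4 : ℝ) ^ n * p a))).PosDef :=
      Matrix.posDef_diagonal_iff.2 fun a => by have := hp a; positivity
    have := hD.conjTranspose_mul_mul_same (B := walshMatrix n)
      (Matrix.mulVec_injective_of_isUnit (IsUnit.of_mul_eq_one _ hO))
    rwa [Matrix.conjTranspose_eq_transpose_of_trivial] at this
  have hPD : (fisherReduced n p).PosDef := hPD0.submatrix Subtype.val_injective
  refine ⟨?_, hPD, fun hF => ?_⟩
  · have := hPD.1
    rwa [Matrix.IsHermitian, Matrix.conjTranspose_eq_transpose_of_trivial] at this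
  set v : PauliIdx n → ℝ := Pi.single a₀ 1 - Pi.single a₁ 1 with hv
  set x : PauliIdx n → ℝ := (walshMatrix n)ᵀ *ᵥ v with hxdef
  have hUx : walshMatrix n *ᵥ x = v := by
    rw [hxdef, Matrix.mulVec_mulVec, hO, Matrix.one_mulVec]
  have hx0 : x (pauliZero n) = 0 := by
    have hz : ∀ a : PauliIdx n, sympl a (pauliZero n) = 0 := by
      intro a; simp [sympl, pauliZero]
    simp [hxdef, hv, Matrix.mulVec_sub, walshMatrix, hz]
  have hadj : ∀ w, x ⬝ᵥ ((walshMatrix n)ᵀ *ᵥ w) = v ⬝ᵥ w := by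
    intro w
    rw [Matrix.dotProduct_mulVec, Matrix.vecMul_transpose, hUx]
  have hvv : v ⬝ᵥ v = 2 := by
    simp [hv, ha₁, ha₁.symm]; norm_num
  have hxx : x ⬝ᵥ x = 2 := by
    conv_lhs => rhs; rw [hxdef]
    rw [hadj, hvv]
  have hxF : x ⬝ᵥ (fisherFull n p *ᵥ x) = 1 / ((4 : ℝ) ^ n * p a₀) + 1 / ((4 : ℝ) ^ n * p a₁) := by
    rw [fisherFull, ← Matrix.mulVec_mulVec, hUx, ← Matrix.mulVec_mulVec, hadj]
    simp [hv, Matrix.mulVec_sub, ha₁, ha₁.symm]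
  set y : {a : PauliIdx n // a ≠ pauliZero n} → ℝ := fun a => x a.1 with hy
  have hyy : y ⬝ᵥ y = x ⬝ᵥ x :=
    aux_sum_subtype (pauliZero n) (fun a => x a * x a) (by simp [hx0])
  have hFy : ∀ a, (fisherReduced n p *ᵥ y) a = (fisherFull n p *ᵥ x) a.1 := fun a =>
    aux_sum_subtype (pauliZero n) (fun b => fisherFull n p a.1 b * x b) (by simp [hx0])
  have hyF : y ⬝ᵥ (fisherReduced n p *ᵥ y) = x ⬝ᵥ (fisherFull n p *ᵥ x) := by
    rw [← show _ = x ⬝ᵥ (fisherFull n p *ᵥ x) from aux_sum_subtype (pauliZero n)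
      (fun a => x a * (fisherFull n p *ᵥ x) a) (by simp [hx0])]
    exact Finset.sum_congr rfl fun a _ => by rw [hFy]
  refine aux_eig _ hF y ?_ _ ?_
  · intro h
    rw [h, hxx] at hyy
    simp at hyy
  · rw [hyF, hyy, hxx, hxF]
    have h1 : 1 / ((4 : ℝ) ^ n * p a₀) ≤ 1 / ((4 : ℝ) ^ n * p a₁) :=
      one_div_le_one_div_of_le (mul_pos hN (hp a₁)) (mul_le_mul_of_nonneg_left (ha₀ a₁) hN.le)
    linarith
end
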